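/- Let Γ be an abelian group, E a Γ-graded division ring, δ̄ = (δ₁,…,δₙ) ∈ Γⁿ, and S = Mₙ(E)(δ̄). Then there exists a group homomorphism det_E : S_h* → E_h*/[E_h*,E_h*] such that whenever A ∈ S_h* has strict Bruhat normal form A = T·U·P_π·V with U = diag(u₁,…,uₙ), one has det_E(A) = sgn(π)·u₁⋯uₙ modulo [E_h*,E_h*]. -/

import Mathlib

set_option maxHeartbeats 1000000

/-- The degree-`lam` homogeneous component of the matrix ring `Mₙ(E)(δ̄)` over a
`Γ`-graded ring `E`, with the grading shifted by `δ̄`. -/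
def MatrixGrade {Γ E : Type*} [AddCommGroup Γ] [Ring E] (𝒜 : Γ → AddSubgroup E)
    {ι : Type*} (δ : ι → Γ) (lam : Γ) : Set (Matrix ι ι E) :=
  {A | ∀ i j, A i j ∈ 𝒜 (lam + δ j - δ i)}

/-- Unipotent lower triangular matrix. -/
def UnipotentLower {R : Type*} [Zero R] [One R] {n : ℕ}
    (T : Matrix (Fin n) (Fin n) R) : Prop :=
  (∀ i j : Fin n, i < j → T i j = 0) ∧ ∀ i, T i i = 1

/-- Unipotent upper triangular matrix. -/
def UnipotentUpper {R : Type*} [Zero R] [One R] {n : ℕ}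
    (V : Matrix (Fin n) (Fin n) R) : Prop :=
  (∀ i j : Fin n, j < i → V i j = 0) ∧ ∀ i, V i i = 1


/-!
In a decomposition `X = T * diag(u) * P_π * V` with `T` lower and `V` upper unitriangular, `π` and
`u` are determined by `X`, so the class of `sgn(π) u₁ ⋯ uₙ` modulo commutators is a function of
`X`, wherever such a decomposition exists. Ask moreover that `T` be homogeneous. The matrices that
admit such a decomposition are then stable under left multiplication by homogeneous unitriangular
matrices, homogeneous invertible diagonal matrices and permutation matrices, and the class is
multiplied by a factor which depends on the multiplier only. The essential case is the interchange
of two adjacent rows `p` and `q`: the entry `T q p` either can be carried past `diag(u) * P_π` into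
`V`, or is nonzero, hence a unit, and then a computation with `2 × 2` matrices removes it.

Elimination writes every homogeneous invertible matrix `A` as a product of such multipliers.
Multiplying the identity matrix by them gives the existence of the decomposition of `A`, and
multiplying a second matrix `B` by them gives `det (A * B) = det A * det B`, by uniqueness.
-/
section Unitriangular

open Matrix Finset

variable {m α R : Type*}

/-- Unitriangular matrices with respect to a ranking `b` of the indices: those of the Bruhat
decomposition that are upper unitriangular have `b = id`, the lower ones `b = OrderDual.toDual`. -/
def IsUnitriangular [Zero R] [One R] [LT α] (b : m → α) (M : Matrix m m R) : Prop :=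
  M.BlockTriangular b ∧ ∀ i, M i i = 1

theorem blockTriangular_mul_apply_self [NonUnitalNonAssocSemiring R] [Fintype m]
    [LinearOrder α] {b : m → α} {M N : Matrix m m R} (hb : b.Injective) (hM : M.BlockTriangular b)
    (hN : N.BlockTriangular b) (i : m) :
    (M * N) i i = M i i * N i i := by
  rw [mul_apply, sum_eq_single_of_mem i (mem_univ i)]
  intro j _ hj
  rcases lt_or_gt_of_ne (hb.ne hj) with h | h
  · rw [hM h, zero_mul]
  · rw [hN h, mul_zero]

theorem IsUnitriangular.mul [Semiring R] [Fintype m] [LinearOrder α] {b : m → α}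
    {M N : Matrix m m R} (hb : b.Injective) (hM : IsUnitriangular b M)
    (hN : IsUnitriangular b N) : IsUnitriangular b (M * N) :=
  ⟨hM.1.mul hN.1, fun i ↦ by
    rw [blockTriangular_mul_apply_self hb hM.1 hN.1, hM.2, hN.2, one_mul]⟩

variable [DecidableEq m]

theorem isUnitriangular_one [Zero R] [One R] [Preorder α] (b : m → α) :
    IsUnitriangular b (1 : Matrix m m R) :=
  ⟨blockTriangular_one, one_apply_eq⟩

theorem isUnitriangular_one_add [AddZeroClass R] [One R] [Preorder α] {b : m → α}
    {N : Matrix m m R} (hN : ∀ i j, b j ≤ b i → N i j = 0) : IsUnitriangular b (1 + N) :=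
  ⟨blockTriangular_one.add fun i j hij ↦ hN i j hij.le,
    fun i ↦ by rw [Matrix.add_apply, one_apply_eq, hN i i le_rfl, add_zero]⟩

theorem isUnitriangular_one_add_single [AddZeroClass R] [One R] [LinearOrder α] {b : m → α}
    {p q : m} {c : R} (h : c ≠ 0 → b p < b q) : IsUnitriangular b (1 + single p q c) := by
  refine isUnitriangular_one_add fun i j hij ↦ ?_
  rw [single_apply]
  split_ifs with hpq
  · obtain ⟨rfl, rfl⟩ := hpq
    exact not_imp_comm.1 h hij.not_gt
  · rfl

theorem isUnitriangular_one_add_column [NonAssocSemiring R] [LinearOrder α] {b : m → α}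
    {c : m → R} {k : m} (hc : ∀ i, b k ≤ b i → c i = 0) :
    IsUnitriangular b (1 + vecMulVec c (Pi.single k 1)) := by
  refine isUnitriangular_one_add fun i j hij ↦ ?_
  obtain rfl | hj := eq_or_ne j k
  · rw [vecMulVec_apply, hc i hij, zero_mul]
  · rw [vecMulVec_apply, Pi.single_eq_of_ne hj, mul_zero]

theorem isUnitriangular_one_add_row [NonAssocSemiring R] [LinearOrder α] {b : m → α}
    {r : m → R} {k : m} (hr : ∀ j, b j ≤ b k → r j = 0) :
    IsUnitriangular b (1 + vecMulVec (Pi.single k 1) r) := by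
  refine isUnitriangular_one_add fun i j hij ↦ ?_
  obtain rfl | hi := eq_or_ne i k
  · rw [vecMulVec_apply, hr j hij, mul_zero]
  · rw [vecMulVec_apply, Pi.single_eq_of_ne hi, zero_mul]

variable [Fintype m] [LinearOrder α] {b : m → α}

theorem pow_apply_eq_zero_of_card_lt [Semiring R] {N : Matrix m m R}
    (hN : ∀ i j, b j ≤ b i → N i j = 0) {k : ℕ} {i : m} (j : m) (hk : #{l | b i < b l} < k) :
    (N ^ k) i j = 0 := by
  induction k generalizing i with
  | zero => exact absurd hk (Nat.not_lt_zero _)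
  | succ k ih =>
    rw [pow_succ', mul_apply]
    refine sum_eq_zero fun l _ ↦ ?_
    rcases le_or_gt (b l) (b i) with hl | hl
    · rw [hN i l hl, zero_mul]
    · have hlt : #{t | b l < b t} < #{t | b i < b t} := card_lt_card <|
        (ssubset_iff_of_subset (monotone_filter_right _ fun t _ ht ↦ hl.trans ht)).2
          ⟨l, by simpa using hl, by simp⟩
      rw [ih (hlt.trans_le (Nat.lt_succ_iff.1 hk)), mul_zero]

namespace IsUnitriangular

theorem one_sub_pow_card_succ [Ring R] {M : Matrix m m R} (hb : b.Injective)
    (hM : IsUnitriangular b M) : (1 - M) ^ (Fintype.card m + 1) = 0 := by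
  have hstrict : ∀ i j, b j ≤ b i → (1 - M) i j = 0 := fun i j hij ↦ by
    rcases hij.lt_or_eq with h | h
    · exact (blockTriangular_one.sub hM.1) h
    · rw [hb h, Matrix.sub_apply, one_apply_eq, hM.2, sub_self]
  ext i j
  exact pow_apply_eq_zero_of_card_lt hstrict j (Nat.lt_succ_of_le (card_le_univ _))

theorem exists_inverse [Ring R] {M : Matrix m m R} (hb : b.Injective)
    (hM : IsUnitriangular b M) :
    ∃ S : Matrix m m R, IsUnitriangular b S ∧ M * S = 1 ∧ S * M = 1 := by
  let S := ∑ k ∈ range (Fintype.card m + 1), (1 - M) ^ k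
  have hMS : M * S = 1 := by
    simpa [hM.one_sub_pow_card_succ hb] using mul_neg_geom_sum (1 - M) (Fintype.card m + 1)
  have hSM : S * M = 1 := by
    simpa [hM.one_sub_pow_card_succ hb] using geom_sum_mul_neg (1 - M) (Fintype.card m + 1)
  have hS : S.BlockTriangular b :=
    sum_mem (S := blockTriangularSubsemiring R b) fun k _ ↦ (blockTriangular_one.sub hM.1).pow k
  refine ⟨S, ⟨hS, fun i ↦ ?_⟩, hMS, hSM⟩
  have hii := blockTriangular_mul_apply_self hb hS hM.1 i
  rwa [hSM, one_apply_eq, hM.2, mul_one, eq_comm] at hii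

theorem isUnit [Ring R] {M : Matrix m m R} (hb : b.Injective) (hM : IsUnitriangular b M) :
    IsUnit M := by
  obtain ⟨S, -, hMS, hSM⟩ := hM.exists_inverse hb
  exact ⟨⟨M, S, hMS, hSM⟩, rfl⟩

end IsUnitriangular

end Unitriangular

section Bruhat

open Matrix OrderDual

theorem perm_eq_one_of_apply_le {α : Type*} [PartialOrder α] [WellFoundedLT α]
    {τ : Equiv.Perm α} (h : ∀ i, τ i ≤ i) : τ = 1 := by
  ext i
  induction i using WellFoundedLT.induction with
  | ind i ih => exact (h i).eq_or_lt.elim id fun hlt ↦ τ.injective (ih _ hlt)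

theorem diagonal_mul_submatrix_apply {l m n R : Type*} [Fintype m] [DecidableEq m]
    [NonUnitalNonAssocSemiring R] (u : m → R) (V : Matrix l n R) (f : m → l) (i : m) (j : n) :
    (diagonal u * V.submatrix f id) i j = u i * V (f i) j :=
  diagonal_mul _ _ _ _

theorem bruhat_unique {m R : Type*} [Fintype m] [LinearOrder m] [Ring R] {T T' V V' : Matrix m m R}
    {u u' : m → R} {π σ : Equiv.Perm m}
    (hT : IsUnitriangular toDual T) (hT' : IsUnitriangular toDual T')
    (hV : IsUnitriangular id V) (hV' : IsUnitriangular id V') (hu' : ∀ i, u' i ≠ 0)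
    (h : T * (diagonal u * V.submatrix π id) = T' * (diagonal u' * V'.submatrix σ id)) :
    π = σ ∧ u = u' := by
  obtain ⟨S, hS, -, hST⟩ := hT'.exists_inverse toDual.injective
  obtain ⟨W, hW, hVW, -⟩ := hV.exists_inverse Function.injective_id
  have hL : IsUnitriangular toDual (S * T) := hS.mul toDual.injective hT
  have hU : IsUnitriangular id (V' * W) := hV'.mul Function.injective_id hW
  have hmonomial : S * T * (diagonal u * (1 : Matrix m m R).submatrix π id) =
      diagonal u' * (V' * W).submatrix σ id := by
    have hπ : V.submatrix π id * W = (1 : Matrix m m R).submatrix π id := by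
      rw [← hVW]
      rfl
    have hσ : V'.submatrix σ id * W = (V' * W).submatrix σ id := rfl
    calc S * T * (diagonal u * (1 : Matrix m m R).submatrix π id)
        = S * (T * (diagonal u * V.submatrix π id)) * W := by rw [← hπ]; simp only [mul_assoc]
      _ = S * T' * (diagonal u' * (V'.submatrix σ id * W)) := by rw [h]; simp only [mul_assoc]
      _ = diagonal u' * (V' * W).submatrix σ id := by rw [hST, one_mul, hσ]
  have hentry (i : m) : (S * T) i (π.symm (σ i)) * u (π.symm (σ i)) = u' i := by
    have hi := congrFun (congrFun hmonomial i) (σ i)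
    rw [diagonal_mul_submatrix_apply, hU.2, mul_one, mul_apply,
      Finset.sum_eq_single_of_mem _ (Finset.mem_univ (π.symm (σ i)))] at hi
    · rwa [diagonal_mul_submatrix_apply, π.apply_symm_apply, one_apply_eq, mul_one] at hi
    · intro l _ hl
      rw [diagonal_mul_submatrix_apply, one_apply_ne fun h ↦ hl ((π.eq_symm_apply).2 h), mul_zero,
        mul_zero]
  have hπσ : π = σ := by
    refine (inv_mul_eq_one.1 (perm_eq_one_of_apply_le fun i ↦ le_of_not_gt fun hlt ↦ ?_))
    exact hu' i (by rw [← hentry i]; exact mul_eq_zero_of_left (hL.1 hlt) _)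
  refine ⟨hπσ, funext fun i ↦ ?_⟩
  simpa [hπσ, hL.2] using hentry i

end Bruhat

section HomogeneousUnits

variable {Γ E : Type*} [AddCommGroup Γ] [Ring E]

/-- A graded ring all of whose nonzero homogeneous elements are units. -/
def IsGradedDivisionRing (𝒜 : Γ → AddSubgroup E) : Prop :=
  ∀ (γ : Γ) (x : E), x ∈ 𝒜 γ → x ≠ 0 → IsUnit x

theorem inv_mem_graded [DecidableEq Γ] {𝒜 : Γ → AddSubgroup E} [GradedRing 𝒜] {γ γ' : Γ} {u : Eˣ}
    (hu : (u : E) ∈ 𝒜 γ) (h : γ + γ' = 0) : ((u⁻¹ : Eˣ) : E) ∈ 𝒜 γ' := by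
  have hmul := DirectSum.coe_decompose_mul_add_of_left_mem 𝒜 (j := γ') (b := ((u⁻¹ : Eˣ) : E)) hu
  rw [u.mul_inv, h, DirectSum.decompose_of_mem_same 𝒜 (SetLike.GradedOne.one_mem (A := 𝒜))] at hmul
  rw [Units.inv_eq_of_mul_eq_one_right hmul.symm]
  exact SetLike.coe_mem _

variable [DecidableEq Γ] (𝒜 : Γ → AddSubgroup E) [GradedRing 𝒜]

/-- The group `E_h*` of homogeneous units of a graded ring `E`. -/
def homogeneousUnits : Subgroup Eˣ where
  carrier := {u | ∃ γ, (u : E) ∈ 𝒜 γ}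
  mul_mem' := fun ⟨_, hu⟩ ⟨_, hv⟩ ↦ ⟨_, SetLike.GradedMul.mul_mem hu hv⟩
  one_mem' := ⟨0, SetLike.GradedOne.one_mem⟩
  inv_mem' := fun ⟨γ, hu⟩ ↦ ⟨-γ, inv_mem_graded hu (add_neg_cancel γ)⟩

theorem neg_one_mem_homogeneousUnits : (-1 : Eˣ) ∈ homogeneousUnits 𝒜 :=
  ⟨0, neg_mem (SetLike.GradedOne.one_mem (A := 𝒜))⟩

/-- The units `±1` of `ℤ` as homogeneous units, for the factor `sgn(π)` of the determinant. -/
def signUnit : ℤˣ →* homogeneousUnits 𝒜 :=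
  (Units.map (Int.castRingHom E : ℤ →* E)).codRestrict (homogeneousUnits 𝒜) fun s ↦ by
    rcases Int.units_eq_one_or s with rfl | rfl
    · rw [map_one]
      exact one_mem _
    · rw [Units.map_neg_one]
      exact neg_one_mem_homogeneousUnits 𝒜

variable {𝒜}

theorem coe_signUnit (s : ℤˣ) : ((signUnit 𝒜 s : Eˣ) : E) = ((s : ℤ) : E) := rfl

theorem IsGradedDivisionRing.exists_homogeneousUnit (hdiv : IsGradedDivisionRing 𝒜) {γ : Γ} {x : E}
    (hx : x ∈ 𝒜 γ) (hx₀ : x ≠ 0) : ∃ u : homogeneousUnits 𝒜, ((u : Eˣ) : E) = x := by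
  obtain ⟨u, rfl⟩ := hdiv γ x hx hx₀
  exact ⟨⟨u, γ, hx⟩, rfl⟩

end HomogeneousUnits

section HomogeneousMatrix

open Matrix

variable {Γ E l m n : Type*} [AddCommGroup Γ] [Ring E]

/-- Matrices of degree zero from column degrees `b` to row degrees `a`. Rows and columns carry
independent degrees so that the factors of an elimination can shift them:
`MatrixGrade 𝒜 δ lam` consists of the matrices with `a = δ` and `b = lam + δ`. -/
def HomogeneousMatrix (𝒜 : Γ → AddSubgroup E) (a : m → Γ) (b : n → Γ) (M : Matrix m n E) : Prop :=
  ∀ i j, M i j ∈ 𝒜 (b j - a i)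

namespace HomogeneousMatrix

variable {𝒜 : Γ → AddSubgroup E} {a : m → Γ} {b : n → Γ} {M N : Matrix m n E}

theorem add (hM : HomogeneousMatrix 𝒜 a b M) (hN : HomogeneousMatrix 𝒜 a b N) :
    HomogeneousMatrix 𝒜 a b (M + N) :=
  fun i j ↦ add_mem (hM i j) (hN i j)

theorem sub (hM : HomogeneousMatrix 𝒜 a b M) (hN : HomogeneousMatrix 𝒜 a b N) :
    HomogeneousMatrix 𝒜 a b (M - N) :=
  fun i j ↦ sub_mem (hM i j) (hN i j)

theorem const_add (hM : HomogeneousMatrix 𝒜 a b M) (γ : Γ) :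
    HomogeneousMatrix 𝒜 (fun i ↦ γ + a i) (fun j ↦ γ + b j) M :=
  fun i j ↦ (add_sub_add_left_eq_sub (b j) (a i) γ).symm ▸ hM i j

theorem submatrix {m' n' : Type*} (hM : HomogeneousMatrix 𝒜 a b M) (f : m' → m) (g : n' → n) :
    HomogeneousMatrix 𝒜 (a ∘ f) (b ∘ g) (M.submatrix f g) :=
  fun i j ↦ hM (f i) (g j)

theorem single [DecidableEq m] [DecidableEq n] {p : m} {q : n} {x : E} (hx : x ∈ 𝒜 (b q - a p)) :
    HomogeneousMatrix 𝒜 a b (Matrix.single p q x) := by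
  intro i j
  rw [Matrix.single_apply]
  split_ifs with h
  · rwa [← h.1, ← h.2]
  · exact zero_mem _

theorem vecMulVec_single_one [DecidableEq n] {v : m → E} {q : n}
    (hv : ∀ i, v i ∈ 𝒜 (b q - a i)) : HomogeneousMatrix 𝒜 a b (vecMulVec v (Pi.single q 1)) := by
  intro i j
  obtain rfl | hj := eq_or_ne j q
  · simpa [vecMulVec_apply] using hv i
  · simp [vecMulVec_apply, hj]

theorem single_one_vecMulVec [DecidableEq m] {p : m} {w : n → E}
    (hw : ∀ j, w j ∈ 𝒜 (b j - a p)) : HomogeneousMatrix 𝒜 a b (vecMulVec (Pi.single p 1) w) := by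
  intro i j
  obtain rfl | hi := eq_or_ne i p
  · simpa [vecMulVec_apply] using hw j
  · simp [vecMulVec_apply, hi]

theorem diagonal [DecidableEq m] {a b : m → Γ} {d : m → E} (hd : ∀ i, d i ∈ 𝒜 (b i - a i)) :
    HomogeneousMatrix 𝒜 a b (Matrix.diagonal d) := by
  intro i j
  rw [Matrix.diagonal_apply]
  split_ifs with h
  · exact h ▸ hd i
  · exact zero_mem _

theorem one [DecidableEq m] [SetLike.GradedOne 𝒜] : HomogeneousMatrix 𝒜 a a 1 :=
  diagonal fun i ↦ (sub_self (a i)).symm ▸ SetLike.GradedOne.one_mem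

theorem mul [Fintype n] [SetLike.GradedMul 𝒜] {c : l → Γ} {N : Matrix n l E}
    (hM : HomogeneousMatrix 𝒜 a b M) (hN : HomogeneousMatrix 𝒜 b c N) :
    HomogeneousMatrix 𝒜 a c (M * N) := fun i k ↦ by
  rw [Matrix.mul_apply]
  exact sum_mem fun j _ ↦ sub_add_sub_cancel' (b j) (a i) (c k) ▸
    SetLike.GradedMul.mul_mem (hM i j) (hN j k)

end HomogeneousMatrix

end HomogeneousMatrix

section Elimination

open Matrix OrderDual

section Ring

variable {m R : Type*} [Fintype m] [DecidableEq m] [Ring R]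

theorem one_sub_vecMulVec_mul_mul_one_sub_vecMulVec_apply (M : Matrix m m R) (c r : m → R)
    (k i j : m) :
    ((1 - vecMulVec c (Pi.single k 1)) * M * (1 - vecMulVec (Pi.single k 1) r)) i j =
      M i j - c i * M k j - (M i k - c i * M k k) * r j := by
  rw [sub_mul, one_mul, vecMulVec_mul, single_one_vecMul, mul_sub, mul_one, mul_vecMulVec,
    mulVec_single_one]
  rfl

theorem one_add_vecMulVec_mul_mul_one_add_vecMulVec (M : Matrix m m R) {c r : m → R} {k : m}
    (hc : c k = 0) (hr : r k = 0) :
    (1 + vecMulVec c (Pi.single k 1)) *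
        ((1 - vecMulVec c (Pi.single k 1)) * M * (1 - vecMulVec (Pi.single k 1) r)) *
      (1 + vecMulVec (Pi.single k 1) r) = M := by
  set C := vecMulVec c (Pi.single k 1)
  set D := vecMulVec (Pi.single k 1) r
  have hC : (1 + C) * (1 - C) = 1 := by
    have hsq : C * C = 0 := by simp [C, mul_vecMulVec, vecMulVec_mulVec, hc]
    rw [← (Commute.one_left C).mul_self_sub_mul_self_eq, hsq, sub_zero, one_mul]
  have hD : (1 - D) * (1 + D) = 1 := by
    have hsq : D * D = 0 := by simp [D, vecMulVec_mul, vecMul_vecMulVec, hr]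
    rw [← (Commute.one_left D).mul_self_sub_mul_self_eq', hsq, sub_zero, one_mul]
  rw [mul_assoc (1 - C), ← mul_assoc (1 + C), hC, one_mul, mul_assoc, hD, mul_one]

end Ring

theorem exists_apply_ne_zero_of_isUnit {m R : Type*} [Fintype m] [DecidableEq m] [Semiring R]
    [Nontrivial R] {M : Matrix m m R} (hM : IsUnit M) (i : m) : ∃ j, M i j ≠ 0 := by
  by_contra! hrow
  obtain ⟨N, hMN⟩ := hM.exists_right_inv
  have hii := congrFun (congrFun hMN i) i
  simp [mul_apply, hrow] at hii

/-- The state of an elimination after `k` steps: off the diagonal, the first `k` rows and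
columns vanish. -/
def IsDiagonalBelow {R : Type*} [Zero R] {n : ℕ} (k : ℕ) (M : Matrix (Fin n) (Fin n) R) : Prop :=
  ∀ i j : Fin n, i ≠ j → (i : ℕ) < k ∨ (j : ℕ) < k → M i j = 0

theorem IsDiagonalBelow.eq_diagonal {R : Type*} [Zero R] {n : ℕ} {M : Matrix (Fin n) (Fin n) R}
    (hM : IsDiagonalBelow n M) : M = diagonal fun i ↦ M i i := by
  ext i j
  obtain rfl | hij := eq_or_ne i j
  · rw [diagonal_apply_eq]
  · rw [diagonal_apply_ne _ hij, hM i j hij (.inl i.2)]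

theorem IsDiagonalBelow.submatrix_swap {R : Type*} [Zero R] {n : ℕ} {k j : Fin n} (hkj : k ≤ j)
    {M : Matrix (Fin n) (Fin n) R} (hM : IsDiagonalBelow k M) :
    IsDiagonalBelow k (M.submatrix id (Equiv.swap k j)) := by
  intro i l hil hk
  have hswap : ∀ t < k, Equiv.swap k j t = t := fun t ht ↦
    Equiv.swap_apply_of_ne_of_ne ht.ne (ht.trans_le hkj).ne
  refine hM i _ (fun h : i = _ ↦ hil ?_) (hk.imp_right fun hl ↦ by rwa [hswap l hl])
  rcases hk with hi | hl
  · rw [← hswap i hi, h, Equiv.swap_apply_self]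
  · rw [h, hswap l hl]

theorem IsDiagonalBelow.one_sub_mul_mul_one_sub {R : Type*} [Ring R] {n : ℕ} {k : Fin n}
    {M : Matrix (Fin n) (Fin n) R} (hM : IsDiagonalBelow k M) {c r : Fin n → R}
    (hc₀ : ∀ i ≤ k, c i = 0) (hc : ∀ i ≠ k, c i * M k k = M i k)
    (hr : ∀ j ≠ k, M k k * r j = M k j) :
    IsDiagonalBelow (k + 1)
      ((1 - vecMulVec c (Pi.single k 1)) * M * (1 - vecMulVec (Pi.single k 1) r)) := by
  intro i j hij h
  rw [one_sub_vecMulVec_mul_mul_one_sub_vecMulVec_apply]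
  obtain rfl | hi := eq_or_ne i k
  · rw [hc₀ i le_rfl, zero_mul, zero_mul, sub_zero, sub_zero, hr j hij.symm, sub_self]
  rw [hc i hi, sub_self, zero_mul, sub_zero]
  obtain rfl | hj := eq_or_ne j k
  · rw [hc i hi, sub_self]
  rcases h with h | h
  · have hik : i < k := lt_of_le_of_ne (Nat.lt_succ_iff.1 h) hi
    rw [hM i j hij (.inl hik), hc₀ i hik.le, zero_mul, sub_zero]
  · have hjk : j < k := lt_of_le_of_ne (Nat.lt_succ_iff.1 h) hj
    rw [hM i j hij (.inr hjk), hM k j hj.symm (.inr hjk), mul_zero, sub_zero]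

variable {Γ E : Type*} [AddCommGroup Γ] [DecidableEq Γ] [Ring E] {𝒜 : Γ → AddSubgroup E}
  [GradedRing 𝒜] {n : ℕ} {a b : Fin n → Γ} {M : Matrix (Fin n) (Fin n) E}

theorem exists_mul_mul_eq_of_isDiagonalBelow (hM : HomogeneousMatrix 𝒜 a b M) {k : Fin n}
    (hk : IsDiagonalBelow k M) {v : Eˣ} (hv : (v : E) = M k k) :
    ∃ T X V : Matrix (Fin n) (Fin n) E, T * X * V = M ∧
      IsUnitriangular toDual T ∧ HomogeneousMatrix 𝒜 a a T ∧
      IsUnitriangular id V ∧ HomogeneousMatrix 𝒜 b b V ∧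
      HomogeneousMatrix 𝒜 a b X ∧ IsDiagonalBelow (k + 1) X := by
  obtain ⟨p, hp, hpM, hMp⟩ : ∃ p ∈ 𝒜 (a k - b k), p * M k k = 1 ∧ M k k * p = 1 :=
    ⟨_, inv_mem_graded (hv ▸ hM k k) (by abel), hv ▸ v.inv_mul, hv ▸ v.mul_inv⟩
  let c : Fin n → E := fun i ↦ if i = k then 0 else M i k * p
  let r : Fin n → E := fun j ↦ if j = k then 0 else p * M k j
  have hc : HomogeneousMatrix 𝒜 a a (vecMulVec c (Pi.single k 1)) := .vecMulVec_single_one <| by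
    intro i
    simp only [c]
    split_ifs
    exacts [zero_mem _, sub_add_sub_cancel' (b k) (a i) (a k) ▸
      SetLike.GradedMul.mul_mem (hM i k) hp]
  have hr : HomogeneousMatrix 𝒜 b b (vecMulVec (Pi.single k 1) r) := .single_one_vecMulVec <| by
    intro j
    simp only [r]
    split_ifs
    exacts [zero_mem _, sub_add_sub_cancel' (a k) (b k) (b j) ▸
      SetLike.GradedMul.mul_mem hp (hM k j)]
  have hc₀ : ∀ i ≤ k, c i = 0 := fun i hi ↦ ite_eq_left_iff.2 fun hne ↦ by
    have hik : i < k := lt_of_le_of_ne hi hne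
    rw [hk i k hne (.inl hik), zero_mul]
  have hr₀ : ∀ j ≤ k, r j = 0 := fun j hj ↦ ite_eq_left_iff.2 fun hne ↦ by
    have hjk : j < k := lt_of_le_of_ne hj hne
    rw [hk k j (Ne.symm hne) (.inr hjk), mul_zero]
  refine ⟨_, _, _, one_add_vecMulVec_mul_mul_one_add_vecMulVec M (if_pos rfl) (if_pos rfl),
    isUnitriangular_one_add_column hc₀, .add .one hc, isUnitriangular_one_add_row hr₀,
    .add .one hr, (HomogeneousMatrix.one.sub hc).mul hM |>.mul (HomogeneousMatrix.one.sub hr),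
    hk.one_sub_mul_mul_one_sub hc₀ (fun i hi ↦ ?_) fun j hj ↦ ?_⟩
  · rw [show c i = M i k * p from if_neg hi, mul_assoc, hpM, mul_one]
  · rw [show r j = p * M k j from if_neg hj, ← mul_assoc, hMp, one_mul]

theorem exists_elimination_step [Nontrivial E] (hdiv : IsGradedDivisionRing 𝒜)
    (hM : HomogeneousMatrix 𝒜 a b M) (hu : IsUnit M) {k : Fin n} (hk : IsDiagonalBelow k M) :
    ∃ (σ : Equiv.Perm (Fin n)) (T X V : Matrix (Fin n) (Fin n) E),
      T * X * V * σ.permMatrix E = M ∧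
      IsUnitriangular toDual T ∧ HomogeneousMatrix 𝒜 a a T ∧
      IsUnitriangular id V ∧ HomogeneousMatrix 𝒜 (b ∘ σ) (b ∘ σ) V ∧
      HomogeneousMatrix 𝒜 a (b ∘ σ) X ∧ IsUnit X ∧ IsDiagonalBelow (k + 1) X := by
  obtain ⟨j, hj⟩ := exists_apply_ne_zero_of_isUnit hu k
  have hkj : k ≤ j := le_of_not_gt fun hlt ↦ hj (hk _ j hlt.ne' (.inr hlt))
  let σ := Equiv.swap k j
  obtain ⟨v, hv⟩ := hdiv _ _ (hM.submatrix id σ k k)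
    (by rwa [submatrix_apply, Equiv.swap_apply_left])
  obtain ⟨T, X, V, hTXV, hT, hT', hV, hV', hX, hXk⟩ :=
    exists_mul_mul_eq_of_isDiagonalBelow (hM.submatrix id σ) (hk.submatrix_swap hkj) hv
  have hMσ : T * X * V * σ.permMatrix E = M := by
    rw [hTXV, PEquiv.mul_toMatrix_toPEquiv, submatrix_submatrix, Equiv.symm_swap,
      ← Equiv.coe_trans, Equiv.swap_swap]
    rfl
  have hσ : IsUnit (σ.permMatrix E) :=
    ⟨⟨_, _, swap_mul_self k j, swap_mul_self k j⟩, rfl⟩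
  have hXu : IsUnit X := by
    rwa [← hMσ, ← hσ.unit_spec, Units.isUnit_mul_units,
      ← (hV.isUnit Function.injective_id).unit_spec, Units.isUnit_mul_units,
      ← (hT.isUnit toDual.injective).unit_spec, Units.isUnit_units_mul] at hu
  exact ⟨σ, T, X, V, hMσ, hT, hT', hV, hV', hX, hXu, hXk⟩

theorem HomogeneousMatrix.induction_on [Nontrivial E] (hdiv : IsGradedDivisionRing 𝒜)
    {P : (Fin n → Γ) → (Fin n → Γ) → Matrix (Fin n) (Fin n) E → Prop}
    (lower : ∀ a T, IsUnitriangular toDual T → HomogeneousMatrix 𝒜 a a T → P a a T)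
    (upper : ∀ a V, IsUnitriangular id V → HomogeneousMatrix 𝒜 a a V → P a a V)
    (perm : ∀ a (σ : Equiv.Perm (Fin n)), P (a ∘ σ) a (σ.permMatrix E))
    (diagonal : ∀ a b (u : Fin n → homogeneousUnits 𝒜),
      (∀ i, ((u i : Eˣ) : E) ∈ 𝒜 (b i - a i)) → P a b (Matrix.diagonal fun i ↦ ((u i : Eˣ) : E)))
    (mul : ∀ a b c M N, P a b M → P b c N → P a c (M * N))
    (hM : HomogeneousMatrix 𝒜 a b M) (hu : IsUnit M) : P a b M := by
  suffices ∀ k ≤ n, ∀ a b M, HomogeneousMatrix 𝒜 a b M → IsUnit M → IsDiagonalBelow k M →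
      P a b M from
    this 0 n.zero_le a b M hM hu fun _ _ _ h ↦ absurd h (by simp)
  intro k hk
  induction hk using Nat.decreasingInduction with
  | self =>
    intro a b M hM hu hdiag
    have hne (i : Fin n) : M i i ≠ 0 := by
      obtain ⟨j, hj⟩ := exists_apply_ne_zero_of_isUnit hu i
      obtain rfl : i = j := not_imp_comm.1 (hdiag i j · (.inl i.2)) hj
      exact hj
    choose u hu using fun i ↦ hdiv.exists_homogeneousUnit (hM i i) (hne i)
    rw [hdiag.eq_diagonal, ← funext hu]
    exact diagonal a b u fun i ↦ hu i ▸ hM i i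
  | of_succ k hk ih =>
    intro a b M hM hu hdiag
    obtain ⟨σ, T, X, V, rfl, hT, hT', hV, hV', hX, hXu, hXk⟩ :=
      exists_elimination_step hdiv hM hu (k := ⟨k, hk⟩) hdiag
    exact mul _ _ _ _ _ (mul _ _ _ _ _ (mul _ _ _ _ _ (lower a T hT hT')
      (ih a _ X hX hXu hXk)) (upper _ V hV hV')) (perm b σ)

end Elimination

section AdjacentSwap

open Matrix OrderDual Equiv

theorem swap_lt_swap_of_lt {α : Type*} [LinearOrder α] {p q i j : α} (hpq : p ⋖ q) (hij : i < j)
    (hne : ¬ (i = p ∧ j = q)) : swap p q i < swap p q j := by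
  have hp : ∀ {l}, p < l → q ≤ l := hpq.ge_of_gt
  have hq : ∀ {l}, l < q → l ≤ p := hpq.le_of_lt
  have := hpq.lt
  simp only [swap_apply_def]
  grind

section DecidableEq

variable {m R : Type*} [Fintype m] [DecidableEq m]

theorem one_add_single_mul_apply [Semiring R] (p q : m) (c : R) (M : Matrix m m R) (i j : m) :
    ((1 + single p q c) * M) i j = M i j + if i = p then c * M q j else 0 := by
  rw [add_mul, one_mul, Matrix.add_apply]
  split_ifs with h
  · rw [h, single_mul_apply_same]
  · rw [single_mul_apply_of_ne _ _ _ _ _ h]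

-- In the rows `p` and `q`, this is
-- `[[c, 1], [1, 0]] = [[1, 0], [c⁻¹, 1]] * diag(c, -c⁻¹) * [[1, c⁻¹], [0, 1]]`.
theorem swap_rows_one_add_single_mul [Ring R] {p q : m} (hpq : p ≠ q) (c : Rˣ)
    (Y : Matrix m m R) :
    ((1 + single q p (c : R)) * Y).submatrix (swap p q) id =
      (1 + single q p ((c⁻¹ : Rˣ) : R)) *
        (diagonal (fun i ↦ ((if i = p then c else if i = q then -c⁻¹ else 1 : Rˣ) : R)) *
          ((1 + single p q ((c⁻¹ : Rˣ) : R)) * Y)) := by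
  ext i j
  rw [submatrix_apply, id, one_add_single_mul_apply, one_add_single_mul_apply,
    diagonal_mul, diagonal_mul, one_add_single_mul_apply, one_add_single_mul_apply]
  obtain rfl | hp := eq_or_ne i p
  · simp [hpq, mul_add, add_comm]
  obtain rfl | hq := eq_or_ne i q
  · simp [hpq, hpq.symm, mul_add]
  · simp [hp, hq, swap_apply_of_ne_of_ne hp hq]

end DecidableEq

variable {m R : Type*} [Fintype m] [LinearOrder m]

theorem exists_one_add_single_mul_diagonal_mul_submatrix_eq [Semiring R] (u : m → Rˣ)
    (π : Perm m) {V : Matrix m m R} (hV : IsUnitriangular id V) {p q : m} {c : R}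
    (h : c ≠ 0 → π p < π q) :
    ∃ W : Matrix m m R, IsUnitriangular id W ∧
      (1 + single p q c) * (diagonal (fun i ↦ (u i : R)) * V.submatrix π id) =
        diagonal (fun i ↦ (u i : R)) * W.submatrix π id := by
  refine ⟨(1 + single (π p) (π q) (↑(u p)⁻¹ * c * u q)) * V,
    .mul Function.injective_id (isUnitriangular_one_add_single fun hc ↦ h ?_) hV, ?_⟩
  · rintro rfl
    simp at hc
  ext i j
  rw [one_add_single_mul_apply, diagonal_mul_submatrix_apply, diagonal_mul_submatrix_apply,
    diagonal_mul_submatrix_apply, one_add_single_mul_apply, mul_add]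
  obtain rfl | hi := eq_or_ne i p
  · simp [mul_assoc]
  · simp [hi]

variable [Ring R]

theorem IsUnitriangular.submatrix_swap_mul_one_add_single {p q : m} (hpq : p ⋖ q)
    {T : Matrix m m R} (hT : IsUnitriangular toDual T) :
    IsUnitriangular toDual
      ((T * (1 + single q p (-T q p))).submatrix (swap p q) (swap p q)) := by
  have hS : IsUnitriangular toDual (T * (1 + single q p (-T q p))) :=
    hT.mul toDual.injective (isUnitriangular_one_add_single fun _ ↦ hpq.lt)
  refine ⟨fun i j hij ↦ ?_, fun i ↦ hS.2 _⟩
  by_cases h : i = p ∧ j = q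
  · obtain ⟨rfl, rfl⟩ := h
    rw [submatrix_apply, swap_apply_left, swap_apply_right, mul_add, mul_one,
      Matrix.add_apply, mul_single_apply_same, hT.2, one_mul, add_neg_cancel]
  · exact hS.1 (swap_lt_swap_of_lt hpq hij h)

theorem mul_one_add_single_neg_mul_one_add_single {p q : m} (hpq : p ≠ q) (c : R)
    (T : Matrix m m R) : T * (1 + single q p (-c)) * (1 + single q p c) = T := by
  have h : (1 + single q p (-c)) * (1 + single q p c) = 1 := by
    rw [add_mul, one_mul, mul_add, mul_one, single_mul_single_of_ne _ _ _ _ hpq, add_zero,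
      add_assoc, ← single_add, add_neg_cancel, single_zero, add_zero]
  rw [mul_assoc, h, mul_one]

end AdjacentSwap

section Determinant

open Matrix OrderDual Equiv

variable {Γ E m : Type*} [AddCommGroup Γ] [DecidableEq Γ] [Ring E] {𝒜 : Γ → AddSubgroup E}
  [GradedRing 𝒜] [Fintype m] [LinearOrder m]

variable (𝒜) in
/-- The signs `±1` modulo commutators of homogeneous units. -/
def signClass : ℤˣ →* Abelianization (homogeneousUnits 𝒜) :=
  Abelianization.of.comp (signUnit 𝒜)

/-- The class of `sgn(π) u₁ ⋯ uₙ` modulo commutators: the determinant of `T diag(u) P_π V`. -/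
def bruhatValue (π : Perm m) (u : m → homogeneousUnits 𝒜) :
    Abelianization (homogeneousUnits 𝒜) :=
  signClass 𝒜 (Perm.sign π) * ∏ i, Abelianization.of (u i)

/-- `X` has a Bruhat decomposition of determinant `x` whose lower unitriangular factor is
homogeneous for the row degrees `a`. The row `i` of `P_π V` is the row `π i` of `V`, which
encodes `P_π V` as `V.submatrix π id`. -/
def HasBruhatDet (a : m → Γ) (X : Matrix m m E) (x : Abelianization (homogeneousUnits 𝒜)) : Prop :=
  ∃ (T : Matrix m m E) (u : m → homogeneousUnits 𝒜) (π : Perm m) (V : Matrix m m E),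
    IsUnitriangular toDual T ∧ HomogeneousMatrix 𝒜 a a T ∧ IsUnitriangular id V ∧
      X = T * (diagonal (fun i ↦ ((u i : Eˣ) : E)) * V.submatrix π id) ∧ x = bruhatValue π u

theorem bruhatValue_mul_swap {p q : m} (hpq : p ≠ q) (π : Perm m)
    (u : m → homogeneousUnits 𝒜) :
    bruhatValue (π * swap p q) (u ∘ swap p q) = signClass 𝒜 (-1) * bruhatValue π u := by
  simp only [bruhatValue, Function.comp_apply]
  rw [Equiv.prod_comp (swap p q) fun i ↦ Abelianization.of (u i), map_mul, Perm.sign_swap hpq,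
    map_mul, mul_comm (signClass 𝒜 _) (signClass 𝒜 (-1)), mul_assoc]

theorem hasBruhatDet_diagonal_mul_submatrix (a : m → Γ) (u : m → homogeneousUnits 𝒜)
    (π : Perm m) {V : Matrix m m E} (hV : IsUnitriangular id V) :
    HasBruhatDet a (diagonal (fun i ↦ ((u i : Eˣ) : E)) * V.submatrix π id) (bruhatValue π u) :=
  ⟨1, u, π, V, isUnitriangular_one _, .one, hV, (one_mul _).symm, rfl⟩

namespace HasBruhatDet

variable {a : m → Γ} {X : Matrix m m E} {x : Abelianization (homogeneousUnits 𝒜)}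

theorem lower_mul (h : HasBruhatDet a X x) {S : Matrix m m E}
    (hS : IsUnitriangular toDual S) (hS' : HomogeneousMatrix 𝒜 a a S) :
    HasBruhatDet a (S * X) x := by
  obtain ⟨T, u, π, V, hT, hT', hV, rfl, rfl⟩ := h
  exact ⟨S * T, u, π, V, hS.mul toDual.injective hT, hS'.mul hT', hV, (mul_assoc _ _ _).symm, rfl⟩

theorem diagonal_mul (h : HasBruhatDet a X x) {a' : m → Γ}
    (d : m → homogeneousUnits 𝒜) (hd : ∀ i, ((d i : Eˣ) : E) ∈ 𝒜 (a i - a' i)) :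
    HasBruhatDet a' (diagonal (fun i ↦ ((d i : Eˣ) : E)) * X)
      ((∏ i, Abelianization.of (d i)) * x) := by
  obtain ⟨T, u, π, V, hT, hT', hV, rfl, rfl⟩ := h
  let D := diagonal fun i ↦ ((d i : Eˣ) : E)
  let D' := diagonal fun i ↦ (((d i : Eˣ)⁻¹ : Eˣ) : E)
  have hDD' : D' * D = 1 := by simp [D, D', diagonal_mul_diagonal]
  have hD' : HomogeneousMatrix 𝒜 a a' D' :=
    .diagonal fun i ↦ inv_mem_graded (hd i) (by abel)
  refine ⟨D * T * D', d * u, π, V, ⟨?_, fun i ↦ ?_⟩,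
    ((HomogeneousMatrix.diagonal hd).mul hT').mul hD', hV, ?_, ?_⟩
  · exact ((blockTriangular_diagonal _).mul hT.1).mul (blockTriangular_diagonal _)
  · rw [mul_diagonal, Matrix.diagonal_mul, hT.2, mul_one, Units.mul_inv]
  · calc D * (T * (diagonal (fun i ↦ ((u i : Eˣ) : E)) * V.submatrix π id))
        = D * T * (D' * D) * (diagonal (fun i ↦ ((u i : Eˣ) : E)) * V.submatrix π id) := by
          rw [hDD', mul_one, mul_assoc]
      _ = D * T * D' * (D * diagonal (fun i ↦ ((u i : Eˣ) : E)) * V.submatrix π id) := by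
          simp only [mul_assoc]
      _ = _ := by
          rw [diagonal_mul_diagonal]
          rfl
  · simp only [bruhatValue, Pi.mul_apply, map_mul, Finset.prod_mul_distrib]
    exact mul_left_comm _ _ _

theorem const_add (h : HasBruhatDet a X x) (γ : Γ) : HasBruhatDet (fun i ↦ γ + a i) X x := by
  obtain ⟨T, u, π, V, hT, hT', hV, hX⟩ := h
  exact ⟨T, u, π, V, hT, hT'.const_add γ, hV, hX⟩

theorem unique [Nontrivial E] {a' : m → Γ} {y : Abelianization (homogeneousUnits 𝒜)}
    (hx : HasBruhatDet a X x) (hy : HasBruhatDet a' X y) : x = y := by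
  obtain ⟨T, u, π, V, hT, -, hV, rfl, rfl⟩ := hx
  obtain ⟨T', u', π', V', hT', -, hV', h, rfl⟩ := hy
  obtain ⟨rfl, hu⟩ := bruhat_unique hT hT' hV hV' (fun i ↦ (u' i : Eˣ).ne_zero) h
  rw [show u = u' from funext fun i ↦ Subtype.ext (Units.ext (congrFun hu i))]

end HasBruhatDet

variable {a : m → Γ} {p q : m} (u : m → homogeneousUnits 𝒜) (π : Perm m) {V : Matrix m m E}

theorem hasBruhatDet_submatrix_swap_of_lt (hpq : p ≠ q) (hV : IsUnitriangular id V) {c : E}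
    (h : c ≠ 0 → π q < π p) :
    HasBruhatDet a (((1 + single q p c) *
      (diagonal (fun i ↦ ((u i : Eˣ) : E)) * V.submatrix π id)).submatrix (swap p q) id)
      (signClass 𝒜 (-1) * bruhatValue π u) := by
  obtain ⟨W, hW, hVW⟩ :=
    exists_one_add_single_mul_diagonal_mul_submatrix_eq (fun i ↦ (u i : Eˣ)) π hV h
  rw [hVW, ← bruhatValue_mul_swap hpq]
  convert hasBruhatDet_diagonal_mul_submatrix a (u ∘ swap p q) (π * swap p q) hW using 1
  ext i j
  rw [submatrix_apply, diagonal_mul_submatrix_apply, diagonal_mul_submatrix_apply]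
  rfl

theorem hasBruhatDet_submatrix_swap_of_unit (hpq : p < q) (hV : IsUnitriangular id V)
    (hπ : π p < π q) (c : homogeneousUnits 𝒜) (hc : ((c : Eˣ) : E) ∈ 𝒜 (a p - a q)) :
    HasBruhatDet (a ∘ swap p q) (((1 + single q p ((c : Eˣ) : E)) *
      (diagonal (fun i ↦ ((u i : Eˣ) : E)) * V.submatrix π id)).submatrix (swap p q) id)
      (signClass 𝒜 (-1) * bruhatValue π u) := by
  obtain ⟨W, hW, hVW⟩ := exists_one_add_single_mul_diagonal_mul_submatrix_eq
    (c := (((c : Eˣ)⁻¹ : Eˣ) : E)) (fun i ↦ (u i : Eˣ)) π hV fun _ ↦ hπ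
  have hc' : (((c : Eˣ)⁻¹ : Eˣ) : E) ∈ 𝒜 (a q - a p) := inv_mem_graded hc (by abel)
  rw [swap_rows_one_add_single_mul hpq.ne, hVW]
  refine HasBruhatDet.lower_mul ?_ (isUnitriangular_one_add_single fun _ ↦ hpq)
    (HomogeneousMatrix.one.add (.single (by simpa using hc')))
  let d (i : m) : homogeneousUnits 𝒜 :=
    if i = p then c else if i = q then signUnit 𝒜 (-1) * c⁻¹ else 1
  have hd (i : m) : ((d i : Eˣ) : E) ∈ 𝒜 (a i - (a ∘ swap p q) i) := by
    obtain rfl | hp := eq_or_ne i p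
    · simpa [d] using hc
    obtain rfl | hq := eq_or_ne i q
    · simpa [d, hp, coe_signUnit] using hc'
    · simpa [d, hp, hq, swap_apply_of_ne_of_ne hp hq] using SetLike.GradedOne.one_mem (A := 𝒜)
  have hd_prod : ∏ i, Abelianization.of (d i) = signClass 𝒜 (-1) := by
    rw [Fintype.prod_eq_mul p q hpq.ne fun i hi ↦ by simp [d, hi.1, hi.2]]
    simp [d, hpq.ne', signClass]
  rw [← hd_prod]
  convert (hasBruhatDet_diagonal_mul_submatrix a u π hW).diagonal_mul d hd using 3
  ext i
  simp only [d]
  split_ifs <;> simp [coe_signUnit]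

theorem HasBruhatDet.submatrix_swap (hdiv : IsGradedDivisionRing 𝒜) {X : Matrix m m E}
    {x : Abelianization (homogeneousUnits 𝒜)} (h : HasBruhatDet a X x) (hpq : p ⋖ q) :
    HasBruhatDet (a ∘ swap p q) (X.submatrix (swap p q) id) (signClass 𝒜 (-1) * x) := by
  obtain ⟨T, u, π, V, hT, hT', hV, rfl, rfl⟩ := h
  rw [← mul_one_add_single_neg_mul_one_add_single hpq.ne (T q p) T, mul_assoc,
    ← submatrix_mul_equiv _ _ _ (swap p q)]
  refine lower_mul ?_ (hT.submatrix_swap_mul_one_add_single hpq) (.submatrix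
    (hT'.mul (HomogeneousMatrix.one.add (.single (neg_mem (hT' q p))))) _ _)
  by_cases hc : T q p ≠ 0 → π q < π p
  · exact hasBruhatDet_submatrix_swap_of_lt u π hpq.ne hV hc
  · obtain ⟨hc₀, hπ⟩ := Classical.not_imp.1 hc
    obtain ⟨c, hc⟩ := hdiv.exists_homogeneousUnit (hT' q p) hc₀
    rw [← hc]
    exact hasBruhatDet_submatrix_swap_of_unit u π hpq.lt hV
      (lt_of_le_of_ne (not_lt.1 hπ) (π.injective.ne hpq.ne)) c (hc ▸ hT' q p)

end Determinant

section Existence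

open Matrix OrderDual Equiv

variable {Γ E : Type*} [AddCommGroup Γ] [DecidableEq Γ] [Ring E] {𝒜 : Γ → AddSubgroup E}
  [GradedRing 𝒜] {n : ℕ} {a b : Fin n → Γ} {X M : Matrix (Fin n) (Fin n) E}
  {x : Abelianization (homogeneousUnits 𝒜)}

namespace HasBruhatDet

theorem submatrix_perm (hdiv : IsGradedDivisionRing 𝒜) (h : HasBruhatDet a X x)
    (σ : Perm (Fin n)) :
    HasBruhatDet (a ∘ σ) (X.submatrix σ id) (signClass 𝒜 (Perm.sign σ) * x) := by
  cases n with
  | zero => simpa [Subsingleton.elim σ 1] using h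
  | succ n =>
    have hσ : σ ∈ Submonoid.closure (Set.range fun i : Fin n ↦ swap i.castSucc i.succ) := by
      rw [Perm.mclosure_swap_castSucc_succ]
      exact Submonoid.mem_top σ
    induction hσ using Submonoid.closure_induction generalizing a X x with
    | mem σ hσ =>
      obtain ⟨i, rfl⟩ := hσ
      rw [Perm.sign_swap i.castSucc_lt_succ.ne]
      exact h.submatrix_swap hdiv (Fin.covBy_iff.2 (by simp))
    | one => simpa using h
    | mul σ τ _ _ hσ hτ =>
      have hστ := hτ (hσ h)
      rwa [submatrix_submatrix, ← mul_assoc, mul_comm (signClass 𝒜 _), ← map_mul,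
        ← map_mul] at hστ

theorem upper_mul (hdiv : IsGradedDivisionRing 𝒜) (h : HasBruhatDet a X x)
    {V : Matrix (Fin n) (Fin n) E} (hV : IsUnitriangular id V)
    (hV' : HomogeneousMatrix 𝒜 a a V) : HasBruhatDet a (V * X) x := by
  have hrev : (Fin.revPerm : Fin n → Fin n) ∘ Fin.revPerm = id := funext Fin.rev_rev
  have hV_rev : IsUnitriangular toDual (V.submatrix Fin.revPerm Fin.revPerm) :=
    ⟨fun _ _ hij ↦ hV.1 (Fin.rev_lt_rev.2 hij), fun _ ↦ hV.2 _⟩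
  have hVX := ((h.submatrix_perm hdiv Fin.revPerm).lower_mul hV_rev
    (hV'.submatrix _ _)).submatrix_perm hdiv Fin.revPerm
  rwa [submatrix_mul_equiv, submatrix_submatrix, ← mul_assoc, ← map_mul, Int.units_mul_self,
    map_one, one_mul, Function.comp_assoc, hrev] at hVX

end HasBruhatDet

theorem hasBruhatDet_one (a : Fin n → Γ) : HasBruhatDet (𝒜 := 𝒜) a 1 1 := by
  simpa [bruhatValue] using hasBruhatDet_diagonal_mul_submatrix (𝒜 := 𝒜) a 1 1
    (isUnitriangular_one (R := E) id)

theorem exists_forall_hasBruhatDet_mul [Nontrivial E] (hdiv : IsGradedDivisionRing 𝒜)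
    (hM : HomogeneousMatrix 𝒜 a b M) (hu : IsUnit M) :
    ∃ y : Abelianization (homogeneousUnits 𝒜),
      ∀ X x, HasBruhatDet b X x → HasBruhatDet a (M * X) (y * x) := by
  refine hM.induction_on hdiv (P := fun a b M ↦ ∃ y : Abelianization (homogeneousUnits 𝒜),
      ∀ X x, HasBruhatDet b X x → HasBruhatDet a (M * X) (y * x))
    (fun a T hT hT' ↦ ⟨1, fun X x h ↦ ?_⟩) (fun a V hV hV' ↦ ⟨1, fun X x h ↦ ?_⟩)
    (fun a σ ↦ ⟨signClass 𝒜 (Perm.sign σ), fun X x h ↦ ?_⟩)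
    (fun a b u hu ↦ ⟨∏ i, Abelianization.of (u i), fun X x h ↦ h.diagonal_mul u hu⟩)
    (fun a b c M N ⟨y, hy⟩ ⟨z, hz⟩ ↦ ⟨y * z, fun X x h ↦ ?_⟩) hu
  · exact (one_mul x).symm ▸ h.lower_mul hT hT'
  · exact (one_mul x).symm ▸ h.upper_mul hdiv hV hV'
  · rw [PEquiv.toMatrix_toPEquiv_mul]
    exact h.submatrix_perm hdiv σ
  · rw [mul_assoc, mul_assoc]
    exact hy _ _ (hz _ _ h)

theorem exists_hasBruhatDet [Nontrivial E] (hdiv : IsGradedDivisionRing 𝒜)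
    (hM : HomogeneousMatrix 𝒜 a b M) (hu : IsUnit M) :
    ∃ x : Abelianization (homogeneousUnits 𝒜), HasBruhatDet a M x := by
  obtain ⟨m, hm⟩ := exists_forall_hasBruhatDet_mul hdiv hM hu
  exact ⟨m, by simpa using hm _ _ (hasBruhatDet_one b)⟩

theorem HasBruhatDet.mul [Nontrivial E] (hdiv : IsGradedDivisionRing 𝒜)
    (hM : HomogeneousMatrix 𝒜 a b M) (hu : IsUnit M)
    {y : Abelianization (homogeneousUnits 𝒜)} (hx : HasBruhatDet a M x)
    (hX : HasBruhatDet b X y) : HasBruhatDet a (M * X) (x * y) := by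
  obtain ⟨m, hm⟩ := exists_forall_hasBruhatDet_mul hdiv hM hu
  have hMm : HasBruhatDet a M m := by simpa using hm _ _ (hasBruhatDet_one b)
  rw [hx.unique hMm]
  exact hm X y hX

theorem coe_signUnit_mul_list_prod (s : ℤˣ) (v : Fin n → homogeneousUnits 𝒜) :
    ((signUnit 𝒜 s * (List.ofFn v).prod : Eˣ) : E) =
      ((s : ℤ) : E) * (List.ofFn fun i ↦ ((v i : Eˣ) : E)).prod := by
  rw [Units.val_mul, coe_signUnit, SubmonoidClass.coe_list_prod,
    ← Units.coeHom_apply (M := E), map_list_prod, List.map_ofFn, List.map_ofFn]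
  rfl

theorem bruhatValue_eq_of_list_prod (π : Perm (Fin n)) (v : Fin n → homogeneousUnits 𝒜) :
    bruhatValue π v = Abelianization.of (signUnit 𝒜 (Perm.sign π) * (List.ofFn v).prod) := by
  rw [map_mul, map_list_prod, List.map_ofFn, List.prod_ofFn]
  rfl

theorem HasBruhatDet.eq_of_eq_mul [Nontrivial E] (hx : HasBruhatDet a X x)
    {T V : Matrix (Fin n) (Fin n) E} {u : Fin n → E} {π : Perm (Fin n)}
    (hT : IsUnitriangular toDual T) (hV : IsUnitriangular id V)
    (h : X = T * diagonal u * π.permMatrix E * V) {w : homogeneousUnits 𝒜}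
    (hw : ((w : Eˣ) : E) = ((Perm.sign π : ℤ) : E) * (List.ofFn u).prod) :
    x = Abelianization.of w := by
  obtain ⟨T', v, σ, V', hT', -, hV', hX, rfl⟩ := hx
  rw [mul_assoc, mul_assoc, PEquiv.toMatrix_toPEquiv_mul] at h
  obtain ⟨rfl, rfl⟩ :=
    bruhat_unique hT hT' hV hV' (fun i ↦ (v i : Eˣ).ne_zero) (h.symm.trans hX)
  rw [bruhatValue_eq_of_list_prod]
  congr 1
  exact Subtype.ext (Units.ext ((coe_signUnit_mul_list_prod _ v).trans hw.symm))

end Existence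

theorem homogeneous_dieudonne_det_general {Γ E : Type*} [AddCommGroup Γ] [DecidableEq Γ]
    [Ring E] [Nontrivial E] (𝒜 : Γ → AddSubgroup E) [GradedRing 𝒜]
    (hdiv : IsGradedDivisionRing 𝒜) {n : ℕ} (δ : Fin n → Γ)
    (Sh : Subgroup (Matrix (Fin n) (Fin n) E)ˣ)
    (hSh : ∀ A ∈ Sh, ∃ lam, A.val ∈ MatrixGrade 𝒜 δ lam) :
    ∃ detE : Sh →* Abelianization (homogeneousUnits 𝒜),
      ∀ (A : Sh) (T : Matrix (Fin n) (Fin n) E) (u : Fin n → E)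
        (π : Equiv.Perm (Fin n)) (V : Matrix (Fin n) (Fin n) E),
        UnipotentLower T → UnipotentUpper V →
        A.val.val = T * Matrix.diagonal u * π.permMatrix E * V →
        ∀ w : homogeneousUnits 𝒜,
          w.val.val = ((Equiv.Perm.sign π : ℤ) : E) * (List.ofFn u).prod →
          detE A = Abelianization.of w := by
  choose lam hlam using fun A : Sh ↦ hSh A A.2
  have hA (A : Sh) : HomogeneousMatrix 𝒜 δ (fun j ↦ lam A + δ j) A.val.val := hlam A
  choose d hd using fun A ↦ exists_hasBruhatDet hdiv (hA A) A.val.isUnit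
  refine ⟨MonoidHom.mk' d fun A B ↦ ?_, fun A T u π V hT hV h w hw ↦ ?_⟩
  · exact (hd (A * B)).unique ((hd A).mul hdiv (hA A) A.val.isUnit ((hd B).const_add (lam A)))
  · exact (hd A).eq_of_eq_mul ⟨fun _ _ ↦ hT.1 _ _, hT.2⟩ ⟨fun _ _ ↦ hV.1 _ _, hV.2⟩ h hw

/-- homogeneous Dieudonné determinant.  Let `E` be a `Γ`-graded
division ring, `δ̄ ∈ Γⁿ` and `S = Mₙ(E)(δ̄)`.  Let `Eh = E_h*` be the group of
homogeneous units of `E` and `Sh = S_h*` the group of homogeneous units of `S`.  Then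
there is a group homomorphism `det_E : S_h* → E_h*/[E_h*, E_h*]` such that whenever
`A ∈ S_h*` has strict Bruhat normal form `A = T * diag(u) * P_π * V`, one has
`det_E A = sgn(π) · u₁ ⋯ uₙ  mod [E_h*, E_h*]`. -/
theorem homogeneous_dieudonne_det {Γ E : Type*} [AddCommGroup Γ] [DecidableEq Γ]
    [Ring E] [Nontrivial E] (𝒜 : Γ → AddSubgroup E) [GradedRing 𝒜]
    (hdiv : ∀ (γ : Γ) (x : E), x ∈ 𝒜 γ → x ≠ 0 → IsUnit x)
    {n : ℕ} (δ : Fin n → Γ)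
    (Eh : Subgroup Eˣ) (hEh : ∀ u : Eˣ, u ∈ Eh ↔ ∃ γ, u.val ∈ 𝒜 γ)
    (Sh : Subgroup (Matrix (Fin n) (Fin n) E)ˣ)
    (hSh : ∀ A : (Matrix (Fin n) (Fin n) E)ˣ,
      A ∈ Sh ↔ ∃ lam, A.val ∈ MatrixGrade 𝒜 δ lam) :
    ∃ detE : ↥Sh →* Abelianization ↥Eh,
      ∀ (A : ↥Sh) (T : Matrix (Fin n) (Fin n) E) (u : Fin n → E)
        (π : Equiv.Perm (Fin n)) (V : Matrix (Fin n) (Fin n) E),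
        UnipotentLower T → (∀ i, IsUnit (u i)) → UnipotentUpper V →
        UnipotentUpper (π.permMatrix E * V * (π⁻¹).permMatrix E) →
        A.val.val = T * Matrix.diagonal u * π.permMatrix E * V →
        ∀ w : ↥Eh,
          w.val.val = ((Equiv.Perm.sign π : ℤ) : E) * (List.ofFn u).prod →
          detE A = Abelianization.of w := by
  obtain rfl : Eh = homogeneousUnits 𝒜 := Subgroup.ext hEh
  obtain ⟨detE, hdet⟩ := homogeneous_dieudonne_det_general 𝒜 hdiv δ Sh fun A ↦ (hSh A).1
  exact ⟨detE, fun A T u π V hT _ hV _ ↦ hdet A T u π V hT hV⟩
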